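/- Let p, q ∈ R be idempotents. Then (1-p)*(1-q) is group invertible if and only if (1-p) - q4 is group invertible and ((1-p)-q4)^π * q3 = 0. -/

import Mathlib

/-!
Put `e = 1 - p` and `x = (1 - p) * (1 - q)`. Then `e * x = x`, `(1 - p) - q4 = x * e` and
`q3 = -(x * p)`, so relative to the decomposition `1 = e + p` the element `x` is the upper
triangular matrix with rows `(b, d)` and `(0, 0)`, where `b = x * e` and `d = x * p = -q3`. Such
an element is group invertible iff `b` is and `b^π * d = 0`: a group inverse `y` of `x`
yields the group inverse `y * e` of `b`, and a group inverse `c` of `b` yields the group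
inverse `c * c * x` of `x`.
-/

variable {R : Type*} [Ring R]

/-- `c` is a group inverse of `a`. -/
def IsGroupInvOf (a c : R) : Prop := a * c * a = a ∧ c * a * c = c ∧ a * c = c * a

/-- `a` is group invertible. -/
def GroupInvertible (a : R) : Prop := ∃ c, IsGroupInvOf a c

/-- The group inverse `a^#` (junk value `0` if it does not exist). -/
noncomputable def gi (a : R) : R :=
  haveI := Classical.dec (GroupInvertible a)
  if h : GroupInvertible a then h.choose else 0

/-- The spectral idempotent `a^π = 1 - a * a^#`. -/
noncomputable def sp (a : R) : R := 1 - a * gi a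

theorem isGroupInvOf_gi {a : R} (h : GroupInvertible a) : IsGroupInvOf a (gi a) := by
  unfold gi
  rw [dif_pos h]
  exact h.choose_spec

theorem IsGroupInvOf.corner {e x y : R} (hex : e * x = x) (h : IsGroupInvOf x y) :
    IsGroupInvOf (x * e) (y * e) := by
  obtain ⟨h1, h2, h3⟩ := h
  have hey : e * y = y := by
    rw [← h2, ← h3, mul_assoc x, ← mul_assoc e, hex]
  have hbc : x * e * (y * e) = x * y * e := by
    rw [mul_assoc x, ← mul_assoc e, hey, mul_assoc]
  have hcb : y * e * (x * e) = y * x * e := by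
    rw [mul_assoc y, ← mul_assoc e, hex, mul_assoc]
  refine ⟨?_, ?_, ?_⟩
  · rw [hbc, mul_assoc _ e, ← mul_assoc e, hex, ← mul_assoc, h1]
  · rw [hcb, mul_assoc _ e, ← mul_assoc e, hey, ← mul_assoc, h2]
  · rw [hbc, hcb, h3]

/-- The hypothesis `hx` says that the spectral idempotent of `x * e` annihilates `x` on the
left. -/
theorem IsGroupInvOf.of_corner {e x c : R} (hex : e * x = x) (h : IsGroupInvOf (x * e) c)
    (hx : x * e * c * x = x) : IsGroupInvOf x (c * c * x) := by
  obtain ⟨h1, h2, h3⟩ := h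
  have hec : e * c = c := by
    rw [← h2, ← h3, mul_assoc (x * e), mul_assoc x, ← mul_assoc e, hex]
  have hxc : x * c = c * (x * e) := by
    rw [← h3, mul_assoc x, hec]
  have hccx : x * (c * c * x) = c * x := by
    rw [← mul_assoc, ← mul_assoc, hxc, h2]
  have hcxx : c * x * x = x := by
    calc c * x * x = c * (x * e) * x := by rw [← mul_assoc c, mul_assoc _ e, hex]
      _ = x := by rw [← h3, hx]
  refine ⟨?_, ?_, ?_⟩
  · rw [hccx, hcxx]
  · rw [mul_assoc c c, mul_assoc c (c * x), hcxx, mul_assoc c x, ← mul_assoc c c x, hccx, mul_assoc]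
  · rw [hccx, mul_assoc c c, mul_assoc c, hcxx]

theorem group_inv_pbar_qbar (p q q1 q2 q3 q4 : R) (hp : p * p = p) (hq : q * q = q)
    (h1 : q1 = p * q * p) (h2 : q2 = p * q * (1 - p))
    (h3 : q3 = (1 - p) * q * p) (h4 : q4 = (1 - p) * q * (1 - p)) :
    GroupInvertible ((1 - p) * (1 - q)) ↔
      GroupInvertible ((1 - p) - q4) ∧ sp ((1 - p) - q4) * q3 = 0 := by
  have hee : (1 - p) * (1 - p) = 1 - p := by
    simp [mul_sub, sub_mul, hp]
  have hep : (1 - p) * p = 0 := by simp [sub_mul, hp]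
  have hb : (1 - p) - q4 = (1 - p) * (1 - q) * (1 - p) := by
    rw [h4, mul_sub (1 - p) 1 q, mul_one, sub_mul _ _ (1 - p), hee]
  have hd : q3 = -((1 - p) * (1 - q) * p) := by
    rw [h3, mul_sub (1 - p) 1 q, mul_one, sub_mul _ _ p, hep, zero_sub, neg_neg]
  have hex : (1 - p) * ((1 - p) * (1 - q)) = (1 - p) * (1 - q) := by
    rw [← mul_assoc, hee]
  rw [hb, hd]
  generalize (1 - p) * (1 - q) = x at hex ⊢
  constructor
  · rintro ⟨y, hy⟩
    have hc := hy.corner hex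
    have hg := isGroupInvOf_gi ⟨_, hc⟩
    refine ⟨⟨_, hc⟩, ?_⟩
    -- `x` lies in `b * R` for `b = x * (1 - p)`, which `b^π` annihilates on the left.
    have hx : x = x * (1 - p) * (y * x) := by
      have hey : (1 - p) * y = y := by
        rw [← hy.2.1, ← hy.2.2, mul_assoc x, ← mul_assoc (1 - p), hex]
      rw [mul_assoc x, ← mul_assoc (1 - p), hey, ← mul_assoc, hy.1]
    have hsx : sp (x * (1 - p)) * x = 0 := by
      have hsb : sp (x * (1 - p)) * (x * (1 - p)) = 0 := by
        rw [sp, sub_mul, one_mul, hg.1, sub_self]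
      calc sp (x * (1 - p)) * x = sp (x * (1 - p)) * (x * (1 - p) * (y * x)) := by rw [← hx]
        _ = 0 := by rw [← mul_assoc, hsb, zero_mul]
    rw [mul_neg, ← mul_assoc, hsx, zero_mul, neg_zero]
  · rintro ⟨hB, hs⟩
    have hg := isGroupInvOf_gi hB
    refine ⟨_, hg.of_corner hex ?_⟩
    rw [mul_neg, neg_eq_zero, sp, sub_mul, one_mul, sub_eq_zero] at hs
    have hx : x = x * (1 - p) + x * p := by rw [← mul_add, sub_add_cancel, mul_one]
    calc x * (1 - p) * gi (x * (1 - p)) * x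
        = x * (1 - p) * gi (x * (1 - p)) * (x * (1 - p) + x * p) := by rw [← hx]
      _ = x := by rw [mul_add, hg.1, ← hs, ← hx]
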